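/- arXiv:2011.10685 — 3 statements merged into one kernel-verified Lean document; each statement's English description precedes it below -/
import Mathlib

section
/- Consider the 2-step fixed-stepsize LIMM method of order two with coefficients α_{-1} = 1, α_0 = −4/3, α_1 = 1/3, β_0 = 2/3, β_1 = 0, μ_{-1} = 2/3, μ_0 = −2/3, μ_1 = 0 and ν_i = 0, whose stability polynomial is (1 − (2/3)z)ζ² − (4/3)ζ + 1/3. Then for every z ∈ ℂ with Re z ≤ 0 and every ζ ∈ ℂ with (1 − (2/3)z)ζ² − (4/3)ζ + 1/3 = 0, one has |ζ| ≤ 1; that is, the method is A-stable. -/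
/-!
A root `ζ` with `1 < ‖ζ‖` forces `z = ϱ(ζ) / σ(ζ)`, so A-stability follows once this quotient has
positive real part outside the closed unit disk. For the present method the quotient is
`3 / 2 - 2 w + w² / 2` with `w = ζ⁻¹`, the symbol of BDF2, and its real part is
`(1 - Re w)² + (1 - ‖w‖²) / 2`, which is positive for `‖w‖ < 1`.
-/

section

open Polynomial

/-- A-stability of a linearly implicit multistep method with characteristic polynomials `ϱ` and `σ`:
for `Re z ≤ 0`, all roots of the stability polynomial `ϱ - z σ` lie in the closed unit disk. -/
def IsAStable (ϱ σ : ℂ[X]) : Prop :=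
  ∀ z : ℂ, z.re ≤ 0 → ∀ ζ : ℂ, (ϱ - C z * σ).IsRoot ζ → ‖ζ‖ ≤ 1

-- Positivity also rules out `σ.eval ζ = 0`, where the quotient would be `0`.
theorem IsAStable.of_re_eval_div_eval_pos {ϱ σ : ℂ[X]}
    (hpos : ∀ ζ : ℂ, 1 < ‖ζ‖ → 0 < (ϱ.eval ζ / σ.eval ζ).re) : IsAStable ϱ σ := by
  intro z hz ζ hroot
  by_contra! hζ
  have hquot : 0 < (ϱ.eval ζ / σ.eval ζ).re := hpos ζ hζ
  have hσ : σ.eval ζ ≠ 0 := by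
    intro hσ
    simp [hσ] at hquot
  have hz_eq : ϱ.eval ζ / σ.eval ζ = z := by
    rw [div_eq_iff hσ, ← sub_eq_zero]
    simpa only [IsRoot.def, eval_sub, eval_mul, eval_C] using hroot
  exact hz.not_gt (hz_eq ▸ hquot)

/-- The polynomial `ϱ` of the 2-step LIMM method of order two, with coefficients `α₋₁, α₀, α₁`. -/
noncomputable def limm2Rho : ℂ[X] := X ^ 2 - C (4 / 3) * X + C (1 / 3)

/-- The polynomial `σ` of the 2-step LIMM method of order two. Its coefficients are the sums
`βᵢ + μᵢ`, of which only `β₋₁ + μ₋₁ = 2 / 3` is nonzero, as `β₀` and `μ₀` cancel. -/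
noncomputable def limm2Sigma : ℂ[X] := C (2 / 3) * X ^ 2

/-- The symbol `3 / 2 - 2 w + w² / 2` of the two-step backward differentiation formula, which is
`ϱ / σ` for the 2-step LIMM method of order two, expressed in `w = ζ⁻¹`. -/
noncomputable def bdf2Symbol (w : ℂ) : ℂ := 3 / 2 - 2 * w + w ^ 2 / 2

theorem eval_limm2Rho_div_eval_limm2Sigma {ζ : ℂ} (hζ : ζ ≠ 0) :
    limm2Rho.eval ζ / limm2Sigma.eval ζ = bdf2Symbol ζ⁻¹ := by
  simp only [limm2Rho, limm2Sigma, bdf2Symbol, eval_add, eval_sub, eval_mul, eval_pow, eval_X,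
    eval_C]
  field

theorem bdf2Symbol_re (w : ℂ) :
    (bdf2Symbol w).re = (1 - w.re) ^ 2 + (1 - ‖w‖ ^ 2) / 2 := by
  rw [Complex.sq_norm, Complex.normSq_apply]
  simp only [bdf2Symbol, pow_two, Complex.add_re, Complex.sub_re, Complex.div_ofNat_re,
    Complex.re_ofNat, Complex.mul_re, Complex.im_ofNat, zero_mul, sub_zero]
  ring

theorem bdf2Symbol_re_pos {w : ℂ} (hw : ‖w‖ < 1) : 0 < (bdf2Symbol w).re := by
  have hw_sq : ‖w‖ ^ 2 < 1 := pow_lt_one₀ (norm_nonneg w) hw two_ne_zero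
  rw [bdf2Symbol_re]
  linarith [sq_nonneg (1 - w.re)]

theorem isAStable_limm2 : IsAStable limm2Rho limm2Sigma := by
  refine .of_re_eval_div_eval_pos fun ζ hζ ↦ ?_
  have hζ_ne : ζ ≠ 0 := norm_pos_iff.mp (one_pos.trans hζ)
  have hinv : ‖ζ⁻¹‖ < 1 := by simpa only [norm_inv] using inv_lt_one_of_one_lt₀ hζ
  rw [eval_limm2Rho_div_eval_limm2Sigma hζ_ne]
  exact bdf2Symbol_re_pos hinv

theorem eval_limm2Rho_sub_C_mul_limm2Sigma (z ζ : ℂ) :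
    (limm2Rho - C z * limm2Sigma).eval ζ =
      (1 - (2 / 3 : ℂ) * z) * ζ ^ 2 - (4 / 3 : ℂ) * ζ + 1 / 3 := by
  simp only [limm2Rho, limm2Sigma, eval_add, eval_sub, eval_mul, eval_pow, eval_X, eval_C]
  ring

end

/-- A-stability of the 2-step fixed-stepsize LIMM method of order two
(coefficients `α₋₁ = 1`, `α₀ = -4/3`, `α₁ = 1/3`, `β₀ = 2/3`, `β₁ = 0`,
`μ₋₁ = 2/3`, `μ₀ = -2/3`, `μ₁ = 0`, `νᵢ = 0`): for every `z` with `Re z ≤ 0`,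
all roots of the stability polynomial `(1 - (2/3) z) ζ² - (4/3) ζ + 1/3`
have modulus at most one. -/
theorem limm2_A_stable :
    ∀ z : ℂ, z.re ≤ 0 → ∀ ζ : ℂ,
      (1 - (2 / 3 : ℂ) * z) * ζ ^ 2 - (4 / 3 : ℂ) * ζ + 1 / 3 = 0 → ‖ζ‖ ≤ 1 :=
  fun z hz ζ hζ ↦ isAStable_limm2 z hz ζ <| (eval_limm2Rho_sub_C_mul_limm2Sigma z ζ).trans hζ
end

section
/- Consider the 2-step fixed-stepsize LIMM-W method of order two with α_{-1} = 1, α_0 = −146619050/133414177, α_1 = 13204873/133414177, μ_{-1} = 73309525/133414177, β_0 + μ_0 = 46899779/133414177, β_1 + μ_1 = 0 and ν_i = 0, whose stability polynomial is (1 − (73309525/133414177) z) ζ² + (−146619050/133414177 − (46899779/133414177) z) ζ + 13204873/133414177. Then for every z ∈ ℂ with Re z ≤ 0, every root ζ of this polynomial satisfies |ζ| ≤ 1; that is, the method is A-stable. -/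
/-!
The polynomials of the method are `ϱ = (ζ - 1)(ζ - a)` and
`σ = ζ ((1 + a) ζ + (1 - 3 a)) / 2` with `a = 13204873/133414177`. For every `a` there is the
partial fraction decomposition
`σ(ζ) / ϱ(ζ) = ζ / (ζ - 1) - (1 - a) / 2 * (ζ / (ζ - a))`.
When `|ζ| > 1` and `0 ≤ a ≤ 1`, the first term has real part greater than `1/2`, while the second
has modulus at most `1/2`. So `Re (σ / ϱ) > 0` outside the closed unit disc, and a root `ζ` there
would force `Re z = Re (ϱ(ζ) / σ(ζ)) > 0`.
-/

namespace LIMM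

section AStable

open Polynomial

/-- A-stability of a linearly implicit multistep method, expressed through the two polynomials
`ϱ` and `σ` that make up its stability polynomial `ϱ - z σ`. -/
def IsAStable (ρ σ : ℂ[X]) : Prop :=
  ∀ z : ℂ, z.re ≤ 0 → ∀ ζ : ℂ, (ρ - C z * σ).IsRoot ζ → ‖ζ‖ ≤ 1

theorem isAStable_of_re_div_pos {ρ σ : ℂ[X]}
    (h : ∀ ζ : ℂ, 1 < ‖ζ‖ → 0 < (σ.eval ζ / ρ.eval ζ).re) : IsAStable ρ σ := by
  intro z hz ζ hroot
  by_contra! hζ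
  have hpos := h ζ hζ
  have hσ : σ.eval ζ ≠ 0 := fun h0 ↦ by simp [h0] at hpos
  have hρ : ρ.eval ζ = z * σ.eval ζ := by simpa [IsRoot.def, sub_eq_zero] using hroot
  have hinv : σ.eval ζ / ρ.eval ζ = z⁻¹ := by rw [hρ, div_mul_cancel_right₀ hσ]
  rw [hinv, Complex.inv_re] at hpos
  exact hpos.not_ge (div_nonpos_of_nonpos_of_nonneg hz (Complex.normSq_nonneg z))

end AStable

section UnitDisc

theorem half_lt_re_div_sub_one_iff {ζ : ℂ} : 1 / 2 < (ζ / (ζ - 1)).re ↔ 1 < ‖ζ‖ := by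
  rcases eq_or_ne ζ 1 with rfl | hζ
  · norm_num
  have hpos : 0 < Complex.normSq (ζ - 1) := Complex.normSq_pos.mpr (sub_ne_zero.mpr hζ)
  have hre : (ζ / (ζ - 1)).re - 1 / 2 = (‖ζ‖ ^ 2 - 1) / (2 * Complex.normSq (ζ - 1)) := by
    rw [Complex.div_re, Complex.sq_norm]
    field_simp
    simp only [Complex.normSq_apply, Complex.sub_re, Complex.sub_im, Complex.one_re,
      Complex.one_im]
    ring
  rw [← sub_pos, hre, div_pos_iff_of_pos_right (by positivity), sub_pos,
    one_lt_sq_iff₀ (norm_nonneg ζ)]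

theorem one_sub_norm_mul_norm_div_sub_le_one {𝕜 : Type*} [NormedField 𝕜] {a ζ : 𝕜}
    (hζ : 1 ≤ ‖ζ‖) : (1 - ‖a‖) * ‖ζ / (ζ - a)‖ ≤ 1 := by
  rw [norm_div, ← mul_div_assoc]
  refine div_le_one_of_le₀ ?_ (norm_nonneg _)
  calc (1 - ‖a‖) * ‖ζ‖ = ‖ζ‖ - ‖a‖ * ‖ζ‖ := by ring
    _ ≤ ‖ζ‖ - ‖a‖ := by gcongr; exact le_mul_of_one_le_right (norm_nonneg a) hζ
    _ ≤ ‖ζ - a‖ := norm_sub_norm_le ζ a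

end UnitDisc

section TwoStep

open Polynomial

/-- The polynomial `ϱ` of a consistent 2-step method with `α_{-1} = 1`, parametrized by its root
`a = α_1` other than `1`. -/
noncomputable def twoStepRho (a : ℝ) : ℂ[X] :=
  (X - 1) * (X - C (a : ℂ))

/-- The polynomial `σ` which, combined with `twoStepRho a`, gives a method of order two with
`β_1 + μ_1 = 0`; the coefficients `μ_{-1} = (1 + a) / 2` and `β_0 + μ_0 = (1 - 3 a) / 2` are the
unique solution of the order conditions `σ(1) = 1 - a` and `2 σ'(1) = 3 - a`. -/
noncomputable def twoStepSigma (a : ℝ) : ℂ[X] :=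
  X * (C ((1 + a) / 2 : ℂ) * X + C ((1 - 3 * a) / 2 : ℂ))

theorem eval_twoStepSigma_div_eval_twoStepRho {a : ℝ} {ζ : ℂ} (h1 : ζ ≠ 1) (ha : ζ ≠ a) :
    (twoStepSigma a).eval ζ / (twoStepRho a).eval ζ =
      ζ / (ζ - 1) - ((1 - a) / 2 : ℝ) * (ζ / (ζ - a)) := by
  have h1' := sub_ne_zero.mpr h1
  have ha' := sub_ne_zero.mpr ha
  simp only [twoStepSigma, twoStepRho, eval_mul, eval_add, eval_sub, eval_X, eval_C, eval_one]
  push_cast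
  field_simp
  ring

theorem re_eval_twoStepSigma_div_eval_twoStepRho_pos {a : ℝ} (ha₀ : 0 ≤ a) (ha₁ : a ≤ 1)
    {ζ : ℂ} (hζ : 1 < ‖ζ‖) :
    0 < ((twoStepSigma a).eval ζ / (twoStepRho a).eval ζ).re := by
  have hnorm : ‖(a : ℂ)‖ = a := Complex.norm_of_nonneg ha₀
  have h1 : ζ ≠ 1 := by rintro rfl; simp at hζ
  have ha : ζ ≠ a := by rintro rfl; exact ha₁.not_gt (hnorm ▸ hζ)
  have hfirst : 1 / 2 < (ζ / (ζ - 1)).re := half_lt_re_div_sub_one_iff.mpr hζ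
  have hsecond : (1 - a) * (ζ / (ζ - a)).re ≤ 1 :=
    calc (1 - a) * (ζ / (ζ - a)).re ≤ (1 - a) * ‖ζ / (ζ - a)‖ :=
          mul_le_mul_of_nonneg_left (Complex.re_le_norm _) (sub_nonneg.mpr ha₁)
      _ ≤ 1 := by simpa only [hnorm] using one_sub_norm_mul_norm_div_sub_le_one (a := (a : ℂ)) hζ.le
  rw [eval_twoStepSigma_div_eval_twoStepRho h1 ha, Complex.sub_re, Complex.re_ofReal_mul]
  linarith

end TwoStep

end LIMM

theorem limmw2_A_stable_general {a : ℝ} (ha₀ : 0 ≤ a) (ha₁ : a ≤ 1) :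
    LIMM.IsAStable (LIMM.twoStepRho a) (LIMM.twoStepSigma a) :=
  LIMM.isAStable_of_re_div_pos fun _ ↦
    LIMM.re_eval_twoStepSigma_div_eval_twoStepRho_pos ha₀ ha₁

/-- A-stability of the 2-step fixed-stepsize LIMM-W method of order two: for every
`z` with `Re z ≤ 0`, all roots of the stability polynomial
`(1 - (73309525/133414177) z) ζ² + (-146619050/133414177 - (46899779/133414177) z) ζ
  + 13204873/133414177` have modulus at most one. -/
theorem limmw2_A_stable :
    ∀ z : ℂ, z.re ≤ 0 → ∀ ζ : ℂ,
      (1 - (73309525 / 133414177 : ℂ) * z) * ζ ^ 2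
        + (-(146619050 / 133414177 : ℂ) - (46899779 / 133414177 : ℂ) * z) * ζ
        + 13204873 / 133414177 = 0 → ‖ζ‖ ≤ 1 := by
  intro z hz ζ hroot
  refine limmw2_A_stable_general (a := 13204873 / 133414177) (by norm_num) (by norm_num) z hz ζ ?_
  simp only [LIMM.twoStepRho, LIMM.twoStepSigma, Polynomial.IsRoot.def, Polynomial.eval_sub,
    Polynomial.eval_mul, Polynomial.eval_add, Polynomial.eval_X, Polynomial.eval_C,
    Polynomial.eval_one]
  push_cast
  linear_combination hroot
end

section
/- The first characteristic polynomial of the 3-step fixed-stepsize LIMM-W method of order three, ϱ(ζ) = ζ³ − (192592391/118869921) ζ² + (41981416/61945353) ζ − 5229175002546/90906657005273, is zero-stable: every complex root of ϱ has modulus at most 1, and every root of modulus exactly 1 is a simple root (in fact ζ = 1 is the unique root on the unit circle and it is simple). -/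
open Polynomial

/-!
Consistency makes `1` a root of `ϱ`. Dividing it out leaves `ζ² - b ζ + c` with `|b| + |c| < 1`, so
on and outside the unit circle the leading term dominates the others, and all remaining roots lie
in the open unit disc.
-/

theorem norm_lt_one_of_isRoot_of_sum_norm_coeff_lt {K : Type*} [NormedDivisionRing K] {p : K[X]}
    (hp : ∑ i ∈ Finset.range p.natDegree, ‖p.coeff i‖ < ‖p.leadingCoeff‖) {ζ : K}
    (hζ : p.IsRoot ζ) : ‖ζ‖ < 1 := by
  by_contra! one_le_norm
  have leading_term_eq : p.leadingCoeff * ζ ^ p.natDegree =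
      -∑ i ∈ Finset.range p.natDegree, p.coeff i * ζ ^ i := by
    rw [IsRoot.def, eval_eq_sum_range, Finset.sum_range_succ] at hζ
    exact eq_neg_of_add_eq_zero_right hζ
  have : ‖p.leadingCoeff‖ * ‖ζ‖ ^ p.natDegree < ‖p.leadingCoeff‖ * ‖ζ‖ ^ p.natDegree :=
    calc ‖p.leadingCoeff‖ * ‖ζ‖ ^ p.natDegree
        = ‖∑ i ∈ Finset.range p.natDegree, p.coeff i * ζ ^ i‖ := by
          rw [← norm_pow, ← norm_mul, leading_term_eq, norm_neg]
      _ ≤ ∑ i ∈ Finset.range p.natDegree, ‖p.coeff i‖ * ‖ζ‖ ^ i := by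
          simpa only [norm_mul, norm_pow] using
            norm_sum_le (Finset.range p.natDegree) fun i ↦ p.coeff i * ζ ^ i
      _ ≤ ∑ i ∈ Finset.range p.natDegree, ‖p.coeff i‖ * ‖ζ‖ ^ p.natDegree := by
          gcongr with i hi
          exact (Finset.mem_range.mp hi).le
      _ = (∑ i ∈ Finset.range p.natDegree, ‖p.coeff i‖) * ‖ζ‖ ^ p.natDegree :=
          (Finset.sum_mul ..).symm
      _ < ‖p.leadingCoeff‖ * ‖ζ‖ ^ p.natDegree := by gcongr
  exact this.false

section StrongRootCondition

variable {K : Type*} [NormedField K]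

/-- The strong root condition on the first characteristic polynomial of a linear multistep method:
`1` is a simple root and every other root lies in the open unit disc. It implies zero-stability. -/
structure StrongRootCondition (p : K[X]) : Prop where
  rootMultiplicity_one : p.rootMultiplicity 1 = 1
  norm_lt_one : ∀ ζ : K, p.IsRoot ζ → ζ ≠ 1 → ‖ζ‖ < 1

namespace StrongRootCondition

theorem isRoot_one {p : K[X]} (hp : StrongRootCondition p) : p.IsRoot 1 := by
  by_contra not_root
  exact zero_ne_one ((rootMultiplicity_eq_zero not_root).symm.trans hp.rootMultiplicity_one)

theorem norm_le_one {p : K[X]} (hp : StrongRootCondition p) {ζ : K} (hζ : p.IsRoot ζ) :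
    ‖ζ‖ ≤ 1 := by
  obtain rfl | ne_one := eq_or_ne ζ 1
  · exact norm_one.le
  · exact (hp.norm_lt_one ζ hζ ne_one).le

theorem eq_one_of_norm_eq_one {p : K[X]} (hp : StrongRootCondition p) {ζ : K} (hζ : p.IsRoot ζ)
    (norm_eq : ‖ζ‖ = 1) : ζ = 1 :=
  of_not_not fun ne_one ↦ (hp.norm_lt_one ζ hζ ne_one).ne norm_eq

theorem X_sub_C_one_mul {q : K[X]} (hq : ∀ ζ : K, q.IsRoot ζ → ‖ζ‖ < 1) :
    StrongRootCondition ((X - C 1) * q) where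
  rootMultiplicity_one := by
    have not_root : ¬q.IsRoot 1 := fun h ↦ (hq 1 h).ne norm_one
    have q_ne_zero : q ≠ 0 := by
      rintro rfl
      exact not_root eval_zero
    rw [rootMultiplicity_mul (mul_ne_zero (X_sub_C_ne_zero 1) q_ne_zero),
      rootMultiplicity_X_sub_C_self, rootMultiplicity_eq_zero not_root]
  norm_lt_one ζ hζ ne_one :=
    hq ζ ((root_mul.mp hζ).resolve_left fun h ↦ ne_one (root_X_sub_C.mp h).symm)

end StrongRootCondition

theorem norm_lt_one_of_isRoot_quadratic {b c : K} (hbc : ‖b‖ + ‖c‖ < 1) {ζ : K}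
    (hζ : (X ^ 2 - C b * X + C c).IsRoot ζ) : ‖ζ‖ < 1 := by
  have natDegree_eq : (X ^ 2 - C b * X + C c).natDegree = 2 := by compute_degree!
  refine norm_lt_one_of_isRoot_of_sum_norm_coeff_lt ?_ hζ
  rw [leadingCoeff, natDegree_eq]
  simpa [Finset.sum_range_succ, coeff_X, coeff_C, add_comm] using hbc

theorem strongRootCondition_cubic {a b c : K} (consistent : 1 - a + b - c = 0)
    (hac : ‖a - 1‖ + ‖c‖ < 1) :
    StrongRootCondition (X ^ 3 - C a * X ^ 2 + C b * X - C c) := by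
  have factorization : X ^ 3 - C a * X ^ 2 + C b * X - C c =
      (X - C 1) * (X ^ 2 - C (a - 1) * X + C c) := by
    obtain rfl : b = a - 1 + c := by linear_combination consistent
    simp only [C_add, C_sub, C_1]
    ring
  rw [factorization]
  exact .X_sub_C_one_mul fun _ ↦ norm_lt_one_of_isRoot_quadratic hac

end StrongRootCondition

/-- Zero-stability of the 3-step fixed-stepsize LIMM-W method of order three:
every root of the first characteristic polynomial
`ϱ(ζ) = ζ³ - (192592391/118869921) ζ² + (41981416/61945353) ζ - 5229175002546/90906657005273`
lies in the closed unit disc, the only root on the unit circle is `ζ = 1`,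
and it is a simple root. -/
theorem limmw3_zero_stable :
    let P : Polynomial ℂ :=
      X ^ 3 - C (192592391 / 118869921 : ℂ) * X ^ 2
        + C (41981416 / 61945353 : ℂ) * X - C (5229175002546 / 90906657005273 : ℂ)
    (∀ ζ : ℂ, P.IsRoot ζ → ‖ζ‖ ≤ 1) ∧
    (∀ ζ : ℂ, P.IsRoot ζ → ‖ζ‖ = 1 → ζ = 1) ∧
    P.IsRoot 1 ∧ P.rootMultiplicity 1 = 1 := by
  intro P
  have hP : StrongRootCondition P := strongRootCondition_cubic (by norm_num) (by norm_num)
  exact ⟨fun _ ↦ hP.norm_le_one, fun _ ↦ hP.eq_one_of_norm_eq_one, hP.isRoot_one,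
    hP.rootMultiplicity_one⟩
end
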